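/- arXiv:math/9201217 — 2 statements merged into one kernel-verified Lean document; each statement's English description precedes it below -/
import Mathlib

section
/- Suppose the unit vectors u_1,…,u_m and positive weights c_1,…,c_m satisfy John's conditions, and let K = {x ∈ ℝ^n : ⟨x, u_i⟩ ≤ 1 for all i}. Let 1 ≤ k ≤ n, and let E be the k-dimensional ellipsoid {x ∈ ℝ^n : Σ_{j=1}^k α_j^{-2} ⟨x−y, v_j⟩² ≤ 1, and ⟨x−y, v_j⟩ = 0 for k+1 ≤ j ≤ n}, for some y ∈ ℝ^n, orthonormal basis (v_j)_{j=1}^n of ℝ^n and positive reals (α_j)_{j=1}^k. If E ⊆ K, then (∏_{j=1}^k α_j)^{1/k} ≤ √(n(n+1)/(k(k+1))); i.e. the k-dimensional volume of E is at most that of a k-dimensional Euclidean ball of radius √(n(n+1)/(k(k+1))). -/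
/-!
Let `n` be the dimension of the space, `k` the number of semi-axes, `S = ∑ j, α j`, and let `P` be
the orthogonal projection onto the span of the axes. Testing the constraint `⟪x, u i⟫ ≤ 1` at the
point of the ellipsoid with parameter `P (u i + q) / ‖P (u i + q)‖` and averaging with the weights
`c i` gives, for every `q`,
`S ≤ ∑ i, c i * (1 - ⟪u i, y⟫) * ‖P (u i + q)‖`.
The translation by `q` leaves the left-hand side unchanged because `∑ i, c i • u i = 0`. Apply
Cauchy–Schwarz in two ways:

* for `q = 0`, the factors `1 - ⟪u i, y⟫` and `‖P (u i)‖` give `S ^ 2 ≤ k * (n + ‖y‖ ^ 2)`;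
* for `q = n⁻¹ • y`, with `1 - ⟪u i, y⟫` absorbed into the weights, `S ^ 2 ≤ n ^ 2 - ‖y‖ ^ 2`.

The first inequality plus `k` times the second eliminates the centre `y`, and the inequality of the
arithmetic and geometric means bounds the product of the semi-axes by `(S / k) ^ k`.
-/

open Finset RealInnerProductSpace

section

variable {E ι κ : Type*} [NormedAddCommGroup E] [InnerProductSpace ℝ E] [Fintype ι] [Fintype κ]

/-- John's conditions on the contact points `u i` and the weights `c i`. Zero weights are allowed,
and the ambient dimension is not a parameter: the last condition makes `E` finite-dimensional. -/
structure IsJohnDecomposition (u : ι → E) (c : ι → ℝ) : Prop where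
  norm_eq_one : ∀ i, ‖u i‖ = 1
  weight_nonneg : ∀ i, 0 ≤ c i
  sum_smul_eq_zero : ∑ i, c i • u i = 0
  sum_inner_smul_eq : ∀ x, ∑ i, (c i * ⟪u i, x⟫) • u i = x

/-- The ellipsoid with centre `y` and semi-axes `α j` in the directions `v j`, encoded as an affine
image of the Euclidean unit ball so that vanishing semi-axes are allowed. -/
def ellipsoid (y : E) (v : κ → E) (α : κ → ℝ) : Set E :=
  {x | ∃ t : κ → ℝ, ∑ j, t j ^ 2 ≤ 1 ∧ y + ∑ j, (α j * t j) • v j = x}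

theorem center_mem_ellipsoid (y : E) (v : κ → E) (α : κ → ℝ) : y ∈ ellipsoid y v α :=
  ⟨0, by simp, by simp⟩

theorem ellipsoid_comp_eq_setOf (y : E) (b : OrthonormalBasis ι ℝ E) {f : κ → ι}
    (hf : Function.Injective f) {α : κ → ℝ} (hα : ∀ j, α j ≠ 0) :
    ellipsoid y (b ∘ f) α =
      {x | ∑ j, (α j ^ 2)⁻¹ * ⟪x - y, b (f j)⟫ ^ 2 ≤ 1 ∧
        ∀ i, i ∉ Set.range f → ⟪x - y, b i⟫ = 0} := by
  classical
  ext x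
  constructor
  · rintro ⟨t, ht, rfl⟩
    have coord (i : ι) : ⟪y + ∑ j, (α j * t j) • (b ∘ f) j - y, b i⟫ =
        ∑ j, if f j = i then α j * t j else 0 := by
      simp [sum_inner, real_inner_smul_left, b.inner_eq_ite]
    refine ⟨ht.trans_eq' (sum_congr rfl fun j _ ↦ ?_), fun i hi ↦ ?_⟩
    · have := hα j
      simp only [coord, hf.eq_iff, sum_ite_eq', mem_univ, if_true]
      field_simp
    · rw [coord]
      exact sum_eq_zero fun j _ ↦ if_neg fun hj ↦ hi ⟨j, hj⟩
  · rintro ⟨hx, hx_zero⟩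
    refine ⟨fun j ↦ (α j)⁻¹ * ⟪x - y, b (f j)⟫, by simpa [mul_pow] using hx, ?_⟩
    have expansion : ∑ j, ⟪x - y, b (f j)⟫ • b (f j) = x - y := by
      calc ∑ j, ⟪x - y, b (f j)⟫ • b (f j) = ∑ i, ⟪x - y, b i⟫ • b i :=
            Fintype.sum_of_injective f hf _ _
              (fun i hi ↦ by rw [hx_zero i hi, zero_smul]) fun _ ↦ rfl
        _ = x - y := by simpa only [real_inner_comm] using b.sum_repr' (x - y)
    simp [hα, expansion]

/-- Homogenised form of the bound on the support function of the ellipsoid. -/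
theorem sum_mul_inner_le_of_ellipsoid_subset {y w : E} {v : κ → E} {α : κ → ℝ} {b : ℝ}
    (h : ellipsoid y v α ⊆ {x | ⟪x, w⟫ ≤ b}) (t : κ → ℝ) :
    ∑ j, α j * t j * ⟪w, v j⟫ ≤ (b - ⟪w, y⟫) * √(∑ j, t j ^ 2) := by
  set r := √(∑ j, t j ^ 2)
  have r_sq : r ^ 2 = ∑ j, t j ^ 2 := Real.sq_sqrt (sum_nonneg fun _ _ ↦ sq_nonneg _)
  obtain r_zero | r_pos : r = 0 ∨ 0 < r := (Real.sqrt_nonneg _).eq_or_lt'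
  · have t_zero : ∀ j, t j = 0 := by
      rw [r_zero, zero_pow two_ne_zero, eq_comm, sum_eq_zero_iff_of_nonneg
        fun _ _ ↦ sq_nonneg _] at r_sq
      simpa using r_sq
    simp [t_zero, r_zero]
  · have normalized_mem : y + ∑ j, (α j * (t j / r)) • v j ∈ ellipsoid y v α := by
      refine ⟨fun j ↦ t j / r, ?_, rfl⟩
      simp only [div_pow, ← sum_div, ← r_sq]
      exact div_self_le_one _
    have bound : ⟪w, y⟫ + ∑ j, α j * (t j / r) * ⟪w, v j⟫ ≤ b := by
      simpa [real_inner_comm w, inner_add_right, inner_sum, real_inner_smul_right] using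
        h normalized_mem
    calc ∑ j, α j * t j * ⟪w, v j⟫ = (∑ j, α j * (t j / r) * ⟪w, v j⟫) * r := by
          rw [sum_mul]
          exact sum_congr rfl fun j _ ↦ by field_simp
      _ ≤ (b - ⟪w, y⟫) * r := by
          gcongr
          exact le_sub_iff_add_le'.2 bound

namespace IsJohnDecomposition

variable {u : ι → E} {c : ι → ℝ}

theorem finiteDimensional (h : IsJohnDecomposition u c) : FiniteDimensional ℝ E := by
  have span_eq_top : Submodule.span ℝ (Set.range u) = ⊤ := by
    refine Submodule.eq_top_iff'.2 fun x ↦ h.sum_inner_smul_eq x ▸ ?_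
    exact Submodule.sum_mem _ fun i _ ↦
      Submodule.smul_mem _ _ (Submodule.subset_span (Set.mem_range_self i))
  exact ⟨span_eq_top ▸ Submodule.fg_span (Set.finite_range u)⟩

theorem sum_weight_mul_inner (h : IsJohnDecomposition u c) (x : E) : ∑ i, c i * ⟪u i, x⟫ = 0 := by
  simpa [sum_inner, real_inner_smul_left] using congrArg (⟪·, x⟫) h.sum_smul_eq_zero

theorem sum_weight_mul_inner_mul_inner (h : IsJohnDecomposition u c) (x z : E) :
    ∑ i, c i * (⟪u i, x⟫ * ⟪u i, z⟫) = ⟪x, z⟫ := by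
  simpa [sum_inner, real_inner_smul_left, mul_assoc] using
    congrArg (⟪·, z⟫) (h.sum_inner_smul_eq x)

theorem sum_weight_mul_inner_sq (h : IsJohnDecomposition u c) (x : E) :
    ∑ i, c i * ⟪u i, x⟫ ^ 2 = ‖x‖ ^ 2 := by
  simpa only [sq, real_inner_self_eq_norm_mul_norm] using h.sum_weight_mul_inner_mul_inner x x

theorem sum_weight_mul_inner_add_mul_inner (h : IsJohnDecomposition u c) (q x z : E) :
    ∑ i, c i * (⟪u i + q, x⟫ * ⟪u i, z⟫) = ⟪x, z⟫ := by
  calc ∑ i, c i * (⟪u i + q, x⟫ * ⟪u i, z⟫)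
      = ∑ i, c i * (⟪u i, x⟫ * ⟪u i, z⟫) + ⟪q, x⟫ * ∑ i, c i * ⟪u i, z⟫ := by
        rw [mul_sum, ← sum_add_distrib]
        exact sum_congr rfl fun i _ ↦ by rw [inner_add_left]; ring
    _ = ⟪x, z⟫ := by
        rw [h.sum_weight_mul_inner_mul_inner, h.sum_weight_mul_inner, mul_zero, add_zero]

theorem sum_weight (h : IsJohnDecomposition u c) : ∑ i, c i = Module.finrank ℝ E := by
  have := h.finiteDimensional
  let b := stdOrthonormalBasis ℝ E
  calc ∑ i, c i = ∑ i, ∑ j, c i * ⟪u i, b j⟫ ^ 2 := by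
        simp only [← mul_sum, b.sum_sq_inner_left, h.norm_eq_one, one_pow, mul_one]
    _ = ∑ j, ∑ i, c i * ⟪u i, b j⟫ ^ 2 := sum_comm
    _ = Module.finrank ℝ E := by simp [h.sum_weight_mul_inner_sq]

theorem sum_weight_mul_one_sub_inner (h : IsJohnDecomposition u c) (y : E) :
    ∑ i, c i * (1 - ⟪u i, y⟫) = Module.finrank ℝ E := by
  simp only [mul_sub, mul_one, sum_sub_distrib, h.sum_weight, h.sum_weight_mul_inner, sub_zero]

theorem sum_weight_mul_one_sub_inner_sq (h : IsJohnDecomposition u c) (y : E) :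
    ∑ i, c i * (1 - ⟪u i, y⟫) ^ 2 = Module.finrank ℝ E + ‖y‖ ^ 2 := by
  calc ∑ i, c i * (1 - ⟪u i, y⟫) ^ 2
      = ∑ i, c i * (1 - ⟪u i, y⟫) - ∑ i, c i * ⟪u i, y⟫ + ∑ i, c i * ⟪u i, y⟫ ^ 2 := by
        rw [← sum_sub_distrib, ← sum_add_distrib]
        exact sum_congr rfl fun i _ ↦ by ring
    _ = Module.finrank ℝ E + ‖y‖ ^ 2 := by
        rw [h.sum_weight_mul_one_sub_inner, h.sum_weight_mul_inner, h.sum_weight_mul_inner_sq,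
          sub_zero]

theorem sum_weight_mul_one_sub_inner_mul_norm_add_sq (h : IsJohnDecomposition u c) (y q : E) :
    ∑ i, c i * (1 - ⟪u i, y⟫) * ‖u i + q‖ ^ 2 =
      Module.finrank ℝ E * (1 + ‖q‖ ^ 2) - 2 * ⟪y, q⟫ := by
  calc ∑ i, c i * (1 - ⟪u i, y⟫) * ‖u i + q‖ ^ 2
      = (∑ i, c i * (1 - ⟪u i, y⟫)) * (1 + ‖q‖ ^ 2) + 2 * ∑ i, c i * ⟪u i, q⟫ -
          2 * ∑ i, c i * (⟪u i, y⟫ * ⟪u i, q⟫) := by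
        rw [sum_mul, mul_sum, mul_sum, ← sum_add_distrib, ← sum_sub_distrib]
        exact sum_congr rfl fun i _ ↦ by rw [norm_add_sq_real, h.norm_eq_one]; ring
    _ = Module.finrank ℝ E * (1 + ‖q‖ ^ 2) - 2 * ⟪y, q⟫ := by
        rw [h.sum_weight_mul_one_sub_inner, h.sum_weight_mul_inner,
          h.sum_weight_mul_inner_mul_inner, mul_zero, add_zero]

theorem sum_weight_mul_sum_inner_sq (h : IsJohnDecomposition u c) {v : κ → E}
    (hv : ∀ j, ‖v j‖ = 1) :
    ∑ i, c i * ∑ j, ⟪u i, v j⟫ ^ 2 = Fintype.card κ := by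
  simp only [mul_sum]
  rw [sum_comm]
  simp [h.sum_weight_mul_inner_sq, hv]

variable {y : E} {v : κ → E} {α : κ → ℝ}

theorem sum_semiaxes_le (h : IsJohnDecomposition u c) (hv : ∀ j, ‖v j‖ = 1)
    (hE : ellipsoid y v α ⊆ {x | ∀ i, ⟪x, u i⟫ ≤ 1}) (q : E) :
    ∑ j, α j ≤ ∑ i, c i * ((1 - ⟪u i, y⟫) * √(∑ j, ⟪u i + q, v j⟫ ^ 2)) := by
  calc ∑ j, α j = ∑ j, α j * ∑ i, c i * (⟪u i + q, v j⟫ * ⟪u i, v j⟫) := by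
        simp [h.sum_weight_mul_inner_add_mul_inner, hv]
    _ = ∑ i, c i * ∑ j, α j * ⟪u i + q, v j⟫ * ⟪u i, v j⟫ := by
        simp only [mul_sum]
        rw [sum_comm]
        exact sum_congr rfl fun i _ ↦ sum_congr rfl fun j _ ↦ by ring
    _ ≤ ∑ i, c i * ((1 - ⟪u i, y⟫) * √(∑ j, ⟪u i + q, v j⟫ ^ 2)) := by
        gcongr with i
        · exact h.weight_nonneg i
        · exact sum_mul_inner_le_of_ellipsoid_subset (fun x hx ↦ hE hx i) _

theorem sq_sum_semiaxes_le_card_mul (h : IsJohnDecomposition u c) (hv : ∀ j, ‖v j‖ = 1)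
    (hα : ∀ j, 0 ≤ α j) (hE : ellipsoid y v α ⊆ {x | ∀ i, ⟪x, u i⟫ ≤ 1}) :
    (∑ j, α j) ^ 2 ≤ Fintype.card κ * (Module.finrank ℝ E + ‖y‖ ^ 2) := by
  have proj_nonneg (i : ι) : 0 ≤ ∑ j, ⟪u i, v j⟫ ^ 2 := sum_nonneg fun _ _ ↦ sq_nonneg _
  have sum_semiaxes_nonneg : 0 ≤ ∑ j, α j := sum_nonneg fun j _ ↦ hα j
  have sum_le := h.sum_semiaxes_le hv hE 0
  simp only [add_zero] at sum_le
  calc (∑ j, α j) ^ 2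
      ≤ (∑ i, c i * ((1 - ⟪u i, y⟫) * √(∑ j, ⟪u i, v j⟫ ^ 2))) ^ 2 := by gcongr
    _ ≤ (∑ i, c i * ∑ j, ⟪u i, v j⟫ ^ 2) * ∑ i, c i * (1 - ⟪u i, y⟫) ^ 2 :=
        sum_sq_le_sum_mul_sum_of_sq_le_mul _
          (fun i _ ↦ mul_nonneg (h.weight_nonneg i) (proj_nonneg i))
          (fun i _ ↦ mul_nonneg (h.weight_nonneg i) (sq_nonneg _))
          fun i _ ↦ by rw [mul_pow, mul_pow, Real.sq_sqrt (proj_nonneg i)]; exact le_of_eq (by ring)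
    _ = Fintype.card κ * (Module.finrank ℝ E + ‖y‖ ^ 2) := by
        rw [h.sum_weight_mul_sum_inner_sq hv, h.sum_weight_mul_one_sub_inner_sq]

theorem sq_sum_semiaxes_le_finrank_mul (h : IsJohnDecomposition u c) (hv : Orthonormal ℝ v)
    (hα : ∀ j, 0 ≤ α j) (hE : ellipsoid y v α ⊆ {x | ∀ i, ⟪x, u i⟫ ≤ 1}) (q : E) :
    (∑ j, α j) ^ 2 ≤
      Module.finrank ℝ E * (Module.finrank ℝ E * (1 + ‖q‖ ^ 2) - 2 * ⟪y, q⟫) := by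
  have bessel (x : E) : √(∑ j, ⟪x, v j⟫ ^ 2) ≤ ‖x‖ := by
    refine (Real.sqrt_le_left (norm_nonneg x)).2 ?_
    simpa [real_inner_comm] using hv.sum_inner_products_le x (s := univ)
  have center_mem (i : ι) : ⟪u i, y⟫ ≤ 1 := by
    simpa only [real_inner_comm] using hE (center_mem_ellipsoid y v α) i
  have weight_nonneg (i : ι) : 0 ≤ c i * (1 - ⟪u i, y⟫) :=
    mul_nonneg (h.weight_nonneg i) (sub_nonneg.2 (center_mem i))
  have sum_semiaxes_nonneg : 0 ≤ ∑ j, α j := sum_nonneg fun j _ ↦ hα j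
  have sum_le : ∑ j, α j ≤ ∑ i, c i * (1 - ⟪u i, y⟫) * ‖u i + q‖ := by
    refine (h.sum_semiaxes_le hv.norm_eq_one hE q).trans (sum_le_sum fun i _ ↦ ?_)
    rw [← mul_assoc]
    exact mul_le_mul_of_nonneg_left (bessel _) (weight_nonneg i)
  calc (∑ j, α j) ^ 2 ≤ (∑ i, c i * (1 - ⟪u i, y⟫) * ‖u i + q‖) ^ 2 := by gcongr
    _ ≤ (∑ i, c i * (1 - ⟪u i, y⟫)) * ∑ i, c i * (1 - ⟪u i, y⟫) * ‖u i + q‖ ^ 2 :=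
        sum_sq_le_sum_mul_sum_of_sq_le_mul _ (fun i _ ↦ weight_nonneg i)
          (fun i _ ↦ mul_nonneg (weight_nonneg i) (sq_nonneg _)) fun i _ ↦ le_of_eq (by ring)
    _ = Module.finrank ℝ E * (Module.finrank ℝ E * (1 + ‖q‖ ^ 2) - 2 * ⟪y, q⟫) := by
        rw [h.sum_weight_mul_one_sub_inner, h.sum_weight_mul_one_sub_inner_mul_norm_add_sq]

theorem sq_sum_semiaxes_le_sq_finrank_sub [Nontrivial E] (h : IsJohnDecomposition u c)
    (hv : Orthonormal ℝ v) (hα : ∀ j, 0 ≤ α j)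
    (hE : ellipsoid y v α ⊆ {x | ∀ i, ⟪x, u i⟫ ≤ 1}) :
    (∑ j, α j) ^ 2 ≤ Module.finrank ℝ E ^ 2 - ‖y‖ ^ 2 := by
  have := h.finiteDimensional
  have finrank_ne : (Module.finrank ℝ E : ℝ) ≠ 0 := mod_cast Module.finrank_pos.ne'
  convert h.sq_sum_semiaxes_le_finrank_mul hv hα hE ((Module.finrank ℝ E : ℝ)⁻¹ • y) using 1
  rw [norm_smul, real_inner_smul_right, real_inner_self_eq_norm_sq, mul_pow, norm_inv,
    RCLike.norm_natCast]
  field_simp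
  ring

end IsJohnDecomposition

theorem geom_mean_le_sum_div_card [Nonempty κ] {α : κ → ℝ} (hα : ∀ j, 0 ≤ α j) :
    (∏ j, α j) ^ ((1 : ℝ) / Fintype.card κ) ≤ (∑ j, α j) / Fintype.card κ := by
  simpa using Real.geom_mean_le_arith_mean univ (fun _ ↦ 1) α (fun _ _ ↦ zero_le_one)
    (by simp [Fintype.card_pos]) fun j _ ↦ hα j

theorem stmt_11_general [Nonempty κ] {u : ι → E} {c : ι → ℝ} (h : IsJohnDecomposition u c)
    {y : E} {v : κ → E} (hv : Orthonormal ℝ v) {α : κ → ℝ} (hα : ∀ j, 0 ≤ α j)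
    (hE : ellipsoid y v α ⊆ {x | ∀ i, ⟪x, u i⟫ ≤ 1}) :
    (∏ j, α j) ^ ((1 : ℝ) / Fintype.card κ) ≤
      √((Module.finrank ℝ E * (Module.finrank ℝ E + 1)) /
        (Fintype.card κ * (Fintype.card κ + 1))) := by
  have : Nontrivial E := ⟨v (Classical.arbitrary κ), 0, hv.ne_zero _⟩
  refine (geom_mean_le_sum_div_card hα).trans (Real.le_sqrt_of_sq_le ?_)
  have card_bound := h.sq_sum_semiaxes_le_card_mul hv.norm_eq_one hα hE
  have finrank_bound := h.sq_sum_semiaxes_le_sq_finrank_sub hv hα hE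
  have combined : (Fintype.card κ + 1) * (∑ j, α j) ^ 2 ≤
      Fintype.card κ * (Module.finrank ℝ E * (Module.finrank ℝ E + 1)) := by
    linear_combination card_bound + (Fintype.card κ : ℝ) * finrank_bound
  rw [div_pow, div_le_div_iff₀ (by positivity) (by positivity)]
  linear_combination (Fintype.card κ : ℝ) * combined

end

/-- Proposition 4: under John's conditions, a `k`-dimensional ellipsoid contained
in `K = {x : ⟪x, u i⟫ ≤ 1 ∀ i}` has `k`-dimensional volume at most that of a
`k`-dimensional ball of radius `√(n(n+1)/(k(k+1)))`; equivalently, the geometric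
mean of its semi-axes satisfies `(∏ j, α j)^(1/k) ≤ √(n(n+1)/(k(k+1)))`. -/
theorem stmt_11 {n m k : ℕ} (hn : 1 ≤ n) (hm : 1 ≤ m) (hk1 : 1 ≤ k) (hkn : k ≤ n)
    (u : Fin m → EuclideanSpace ℝ (Fin n)) (c : Fin m → ℝ)
    (hu : ∀ i, ‖u i‖ = 1) (hc : ∀ i, 0 < c i)
    (ha : ∑ i, c i • u i = 0)
    (hb : ∀ x : EuclideanSpace ℝ (Fin n), ∑ i, (c i * ⟪u i, x⟫) • u i = x)
    (y : EuclideanSpace ℝ (Fin n))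
    (v : OrthonormalBasis (Fin n) ℝ (EuclideanSpace ℝ (Fin n)))
    (α : Fin k → ℝ) (hα : ∀ j, 0 < α j)
    (hEK : {x : EuclideanSpace ℝ (Fin n) |
        (∑ j : Fin k, ((α j) ^ 2)⁻¹ * ⟪x - y, v (Fin.castLE hkn j)⟫ ^ 2 ≤ 1) ∧
        ∀ j : Fin n, k ≤ (j : ℕ) → ⟪x - y, v j⟫ = 0} ⊆
      {x : EuclideanSpace ℝ (Fin n) | ∀ i, ⟪x, u i⟫ ≤ 1}) :
    (∏ j, α j) ^ ((1 : ℝ) / k) ≤ Real.sqrt ((n * (n + 1)) / (k * (k + 1))) := by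
  have : NeZero k := ⟨by lia⟩
  simpa using stmt_11_general (κ := Fin k) (y := y) ⟨hu, fun i ↦ (hc i).le, ha, hb⟩
    (v.orthonormal.comp _ (Fin.castLE_injective hkn)) (fun j ↦ (hα j).le)
    (by simpa [ellipsoid_comp_eq_setOf y v (Fin.castLE_injective hkn) fun j ↦ (hα j).ne'] using hEK)
end

section
/- Suppose the unit vectors u_1,…,u_m and positive weights c_1,…,c_m satisfy John's conditions, and let K = {x ∈ ℝ^n : ⟨x, u_i⟩ ≤ 1 for all i}. Then for all x, y ∈ K, one has n + ⟨x, y⟩ ≥ 0. -/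
open Finset RealInnerProductSpace

/-!
For `x, y ∈ K` the sum `∑ c i * ((1 - ⟪x, u i⟫) * (1 - ⟪y, u i⟫))` has nonnegative terms. In its
expansion the linear terms vanish since `∑ c i • u i = 0`, the quadratic term is `⟪x, y⟫`, and the
constant term `∑ c i` is the dimension, the trace of both sides of `∑ c i • (u i ⊗ u i) = I`.
-/

section RCLike

variable {𝕜 E ι : Type*} [RCLike 𝕜] [NormedAddCommGroup E] [InnerProductSpace 𝕜 E] [Fintype ι]

/-- The weights `c` and vectors `u` decompose the identity of `E`, i.e. `∑ c i • (u i ⊗ u i) = I`.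
This is the second of John's conditions, stated pointwise; the vectors need not be unit vectors. -/
def IsIdentityDecomposition (c : ι → 𝕜) (u : ι → E) : Prop :=
  ∀ x, ∑ i, (c i * inner 𝕜 (u i) x) • u i = x

namespace IsIdentityDecomposition

variable {c : ι → 𝕜} {u : ι → E}

lemma finiteDimensional (h : IsIdentityDecomposition c u) : FiniteDimensional 𝕜 E :=
  .of_surjective (Fintype.linearCombination 𝕜 u) fun x ↦ ⟨fun i ↦ c i * inner 𝕜 (u i) x, h x⟩

lemma sum_mul_inner_mul_inner (h : IsIdentityDecomposition c u) (x y : E) :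
    ∑ i, c i * (inner 𝕜 x (u i) * inner 𝕜 (u i) y) = inner 𝕜 x y := by
  conv_rhs => rw [← h y, inner_sum]
  refine sum_congr rfl fun i _ ↦ ?_
  rw [inner_smul_right]
  ring

lemma sum_smul_rankOne (h : IsIdentityDecomposition c u) :
    ∑ i, c i • InnerProductSpace.rankOne 𝕜 (u i) (u i) = ContinuousLinearMap.id 𝕜 E := by
  ext x
  simpa [smul_smul] using h x

lemma sum_mul_inner_self (h : IsIdentityDecomposition c u) :
    ∑ i, c i * inner 𝕜 (u i) (u i) = Module.finrank 𝕜 E := by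
  have := h.finiteDimensional
  have htrace := congrArg (fun T : E →L[𝕜] E ↦ LinearMap.trace 𝕜 E T) h.sum_smul_rankOne
  simpa [InnerProductSpace.trace_rankOne, -inner_self_eq_norm_sq_to_K] using htrace

lemma sum_weights_eq_finrank (h : IsIdentityDecomposition c u) (hu : ∀ i, ‖u i‖ = 1) :
    ∑ i, c i = Module.finrank 𝕜 E := by
  simpa [inner_self_eq_norm_sq_to_K, hu] using h.sum_mul_inner_self

end IsIdentityDecomposition

end RCLike

section Real

variable {E ι : Type*} [NormedAddCommGroup E] [InnerProductSpace ℝ E] [Fintype ι]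
  {c : ι → ℝ} {u : ι → E}

lemma sum_mul_inner_eq_zero_of_sum_smul_eq_zero (hcu : ∑ i, c i • u i = 0) (x : E) :
    ∑ i, c i * ⟪x, u i⟫ = 0 := by
  simpa only [inner_sum, inner_smul_right, inner_zero_right] using congrArg (inner ℝ x) hcu

lemma IsIdentityDecomposition.sum_mul_one_sub_inner_mul_one_sub_inner
    (h : IsIdentityDecomposition c u) (hcu : ∑ i, c i • u i = 0) (x y : E) :
    ∑ i, c i * ((1 - ⟪x, u i⟫) * (1 - ⟪y, u i⟫)) = ∑ i, c i + ⟪x, y⟫ := by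
  calc
    _ = ∑ i, (c i - c i * ⟪x, u i⟫ - c i * ⟪y, u i⟫ + c i * (⟪x, u i⟫ * ⟪u i, y⟫)) := by
      refine sum_congr rfl fun i _ ↦ ?_
      rw [real_inner_comm y (u i)]
      ring
    _ = ∑ i, c i - ∑ i, c i * ⟪x, u i⟫ - ∑ i, c i * ⟪y, u i⟫
          + ∑ i, c i * (⟪x, u i⟫ * ⟪u i, y⟫) := by
      simp only [sum_add_distrib, sum_sub_distrib]
    _ = ∑ i, c i + ⟪x, y⟫ := by
      rw [sum_mul_inner_eq_zero_of_sum_smul_eq_zero hcu,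
        sum_mul_inner_eq_zero_of_sum_smul_eq_zero hcu, h.sum_mul_inner_mul_inner, sub_zero,
        sub_zero]

lemma IsIdentityDecomposition.sum_weights_add_inner_nonneg (h : IsIdentityDecomposition c u)
    (hc : ∀ i, 0 ≤ c i) (hcu : ∑ i, c i • u i = 0) {x y : E}
    (hx : ∀ i, ⟪x, u i⟫ ≤ 1) (hy : ∀ i, ⟪y, u i⟫ ≤ 1) :
    0 ≤ ∑ i, c i + ⟪x, y⟫ := by
  rw [← h.sum_mul_one_sub_inner_mul_one_sub_inner hcu]
  exact sum_nonneg fun i _ ↦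
    mul_nonneg (hc i) (mul_nonneg (sub_nonneg.2 (hx i)) (sub_nonneg.2 (hy i)))

theorem stmt_15_general (hu : ∀ i, ‖u i‖ = 1) (hc : ∀ i, 0 ≤ c i) (hcu : ∑ i, c i • u i = 0)
    (h : IsIdentityDecomposition c u) {x y : E}
    (hx : ∀ i, ⟪x, u i⟫ ≤ 1) (hy : ∀ i, ⟪y, u i⟫ ≤ 1) :
    0 ≤ Module.finrank ℝ E + ⟪x, y⟫ := by
  rw [← h.sum_weights_eq_finrank hu]
  exact h.sum_weights_add_inner_nonneg hc hcu hx hy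

end Real

/-- Under John's conditions, any two points `x, y` of
`K = {x : ⟪x, u i⟫ ≤ 1 ∀ i}` satisfy `n + ⟪x, y⟫ ≥ 0`. -/
theorem stmt_15 {n m : ℕ} (hn : 1 ≤ n) (hm : 1 ≤ m)
    (u : Fin m → EuclideanSpace ℝ (Fin n)) (c : Fin m → ℝ)
    (hu : ∀ i, ‖u i‖ = 1) (hc : ∀ i, 0 < c i)
    (ha : ∑ i, c i • u i = 0)
    (hb : ∀ x : EuclideanSpace ℝ (Fin n), ∑ i, (c i * ⟪u i, x⟫) • u i = x)
    (x y : EuclideanSpace ℝ (Fin n))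
    (hx : ∀ i, ⟪x, u i⟫ ≤ 1) (hy : ∀ i, ⟪y, u i⟫ ≤ 1) :
    0 ≤ n + ⟪x, y⟫ := by
  simpa only [finrank_euclideanSpace_fin] using
    stmt_15_general hu (fun i ↦ (hc i).le) ha hb hx hy
end
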